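/- Let m, m' ≥ 2 and n = m·m'. Then 3 · |{ c ∈ C : wt(c) = 2^{n−2} }| = 2 · ( (3·2^{m'} − 2)^m − 3·2^{n} + 2 ); equivalently, the number of minimum weight codewords of C is (2/3)·((3·2^{m'} − 2)^m − 3·2^{m·m'} + 2). -/

import Mathlib

/-- Monomial evaluation: `mon_S(α) = ∏_{i ∈ S} α i`. -/
def mon {n : ℕ} (S : Finset (Fin n)) : (Fin n → ZMod 2) → ZMod 2 :=
  fun x => ∏ i ∈ S, x i

/-- The Reed–Muller code `RM(r, n)` : span of the monomials of degree at most `r`. -/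
def RMcode (r n : ℕ) : Submodule (ZMod 2) ((Fin n → ZMod 2) → ZMod 2) :=
  Submodule.span (ZMod 2) {c | ∃ S : Finset (Fin n), S.card ≤ r ∧ c = mon S}

/-- The second-order recursive subproduct code `C = RM(1,m')^{⊗[2,m]}` of length `2^{m·m'}`:
span of the monomials `mon_S` with `|S| ≤ 2` and `|S ∩ Bᵢ| ≤ 1` for every block
`Bᵢ = {(i−1)·m', …, i·m'−1}` (an index `i : Fin (m·m')` lies in block `(i : ℕ) / m'`). -/
def Ccode (m m' : ℕ) : Submodule (ZMod 2) ((Fin (m * m') → ZMod 2) → ZMod 2) :=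
  Submodule.span (ZMod 2) {c | ∃ S : Finset (Fin (m * m')),
    S.card ≤ 2 ∧ (∀ b : ℕ, (S.filter fun i : Fin (m * m') => (i : ℕ) / m' = b).card ≤ 1) ∧ c = mon S}

/-- Hamming weight: the number of evaluation points where `c` takes the value `1`. -/
def wt {n : ℕ} (c : (Fin n → ZMod 2) → ZMod 2) : ℕ :=
  (Finset.univ.filter fun x => c x = 1).card

/-!
All words of the code are quadratic functions on a space of `2 ^ n` points. If such an `f` has
weight `2 ^ (n - 2)`, then its support is a flat of codimension two: when `f x = f (x + y) = 1`, the
derivative of `f` along `y` is affine with support smaller than half of the space, hence zero, so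
that `y` is a period of `f`. These flats are counted by pairs of independent linear forms `(φ, ψ)`:
each flat is cut out by six such pairs and each pair cuts out four flats, all in the code or none,
according to whether `φ * ψ` is in it. The quadratic part of `φ * ψ` has no monomial `xᵢ xⱼ` with
`i`, `j` in the same block iff the restrictions of `φ` and `ψ` to each block are dependent. A block
of size `k` admits `3 * 2 ^ k - 2` dependent pairs, and the globally dependent pairs, of which there
are `3 * 2 ^ n - 2`, have to be removed from the product.
-/

open Module Finset

section Weight

lemma zmod_two_eq_one_of_ne_zero {a : ZMod 2} : a ≠ 0 → a = 1 := by
  revert a; decide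

lemma hammingNorm_eq_sum_val {α : Type*} [Fintype α] (f : α → ZMod 2) :
    hammingNorm f = ∑ x, (f x).val := by
  have val_eq_ite : ∀ a : ZMod 2, a.val = if a ≠ 0 then 1 else 0 := by decide
  simp only [hammingNorm, card_filter, val_eq_ite]

lemma hammingNorm_add_hammingNorm {α : Type*} [Fintype α] (f g : α → ZMod 2) :
    hammingNorm f + hammingNorm g = hammingNorm (f + g) + 2 * hammingNorm (f * g) := by
  have val_add_val : ∀ a b : ZMod 2, a.val + b.val = (a + b).val + 2 * (a * b).val := by decide
  simp only [hammingNorm_eq_sum_val, mul_sum, ← sum_add_distrib, Pi.add_apply, Pi.mul_apply,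
    val_add_val]

lemma hammingNorm_comp_add_right {G β : Type*} [AddGroup G] [Fintype G] [Zero β] [DecidableEq β]
    (f : G → β) (u : G) : hammingNorm (fun x => f (x + u)) = hammingNorm f :=
  card_equiv (Equiv.addRight u) (by simp)

lemma hammingNorm_one {α β : Type*} [Fintype α] [MulZeroOneClass β] [Nontrivial β]
    [DecidableEq β] : hammingNorm (1 : α → β) = Fintype.card α := by
  simp [hammingNorm]

lemma eq_of_hammingNorm_le {α : Type*} [Fintype α] {f g : α → ZMod 2}
    (hfg : ∀ x, f x = 1 → g x = 1) (hle : hammingNorm g ≤ hammingNorm f) : f = g := by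
  have support_eq : ({x | f x ≠ 0} : Finset α) = ({x | g x ≠ 0} : Finset α) := by
    refine eq_of_subset_of_card_le (monotone_filter_right _ fun x _ hx => ?_) hle
    exact (hfg x (zmod_two_eq_one_of_ne_zero hx)).symm ▸ one_ne_zero
  ext x
  have hx : f x ≠ 0 ↔ g x ≠ 0 := by simpa using congrArg (x ∈ ·) support_eq
  by_cases hf : f x = 0
  · rw [hf, not_not.mp (mt hx.mpr (not_not.mpr hf))]
  · rw [zmod_two_eq_one_of_ne_zero hf, zmod_two_eq_one_of_ne_zero (hx.mp hf)]

lemma exists_eq_one_of_four_mul_hammingNorm {α : Type*} [Fintype α] [Nonempty α] {f : α → ZMod 2}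
    (hw : 4 * hammingNorm f = Fintype.card α) : ∃ x, f x = 1 := by
  have hf : f ≠ 0 := hammingNorm_pos_iff.mp (by have := Fintype.card_pos (α := α); omega)
  obtain ⟨x, hx⟩ := Function.ne_iff.mp hf
  exact ⟨x, zmod_two_eq_one_of_ne_zero hx⟩

end Weight

section LinearAlgebra

lemma linearIndependent_pair_zmod_two_iff {M : Type*} [AddCommGroup M] [Module (ZMod 2) M]
    {x y : M} : LinearIndependent (ZMod 2) ![x, y] ↔ x ≠ 0 ∧ y ≠ 0 ∧ x ≠ y := by
  by_cases hx : x = 0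
  · exact iff_of_false (fun h => h.ne_zero 0 hx) (fun h => h.1 hx)
  · rw [LinearIndependent.pair_iff' hx]
    refine ⟨fun h => ⟨hx, ?_, ?_⟩, fun ⟨_, hy, hxy⟩ a => ?_⟩
    · simpa using (h 0).symm
    · simpa using h 1
    · obtain rfl | ha := eq_or_ne a 0
      · simpa using hy.symm
      · simpa [zmod_two_eq_one_of_ne_zero ha] using hxy

lemma natCard_mul_natCard_dualAnnihilator {K V : Type*} [Field K] [AddCommGroup V]
    [Module K V] [FiniteDimensional K V] (W : Submodule K V) :
    Nat.card W * Nat.card W.dualAnnihilator = Nat.card V := by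
  rw [natCard_eq_pow_finrank (K := K) (V := W),
    natCard_eq_pow_finrank (K := K) (V := W.dualAnnihilator),
    natCard_eq_pow_finrank (K := K) (V := V), ← pow_add,
    Subspace.finrank_add_finrank_dualAnnihilator_eq]

section PairCount

variable {M : Type*} [AddCommGroup M] [Module (ZMod 2) M] [Finite M]

lemma natCard_linearIndependent_pair_mem (A : Submodule (ZMod 2) M) :
    Nat.card {p : M × M // LinearIndependent (ZMod 2) ![p.1, p.2] ∧ p.1 ∈ A ∧ p.2 ∈ A} =
      (Nat.card A - 1) * (Nat.card A - 2) := by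
  classical
  have := Fintype.ofFinite M
  have card_nonzero : #(({x | x ∈ A} : Finset M).erase 0) = Nat.card A - 1 := by
    rw [card_erase_of_mem (by simp), ← Fintype.card_subtype, ← Nat.card_eq_fintype_card]
  have eq_offDiag :
      ({p | LinearIndependent (ZMod 2) ![p.1, p.2] ∧ p.1 ∈ A ∧ p.2 ∈ A} : Finset (M × M)) =
        (({x | x ∈ A} : Finset M).erase 0).offDiag := by
    ext p
    simp only [linearIndependent_pair_zmod_two_iff, mem_filter, mem_univ, true_and, mem_offDiag,
      mem_erase]
    tauto
  rw [Nat.card_eq_fintype_card, Fintype.card_subtype, eq_offDiag, offDiag_card, card_nonzero,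
    ← Nat.mul_sub_one, Nat.sub_sub]

variable (M) in
lemma natCard_not_linearIndependent_pair :
    (Nat.card {p : M × M // ¬LinearIndependent (ZMod 2) ![p.1, p.2]} : ℤ) =
      3 * Nat.card M - 2 := by
  classical
  have := Fintype.ofFinite M
  have independent : #{p : M × M | LinearIndependent (ZMod 2) ![p.1, p.2]} =
      (Nat.card M - 1) * (Nat.card M - 2) := by
    simpa [Fintype.card_subtype] using
      natCard_linearIndependent_pair_mem (⊤ : Submodule (ZMod 2) M)
  have total := card_filter_add_card_filter_not (s := (univ : Finset (M × M)))
    (fun p => LinearIndependent (ZMod 2) ![p.1, p.2])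
  rw [independent, card_univ, Fintype.card_prod, ← Nat.card_eq_fintype_card] at total
  rw [Nat.card_eq_fintype_card, Fintype.card_subtype]
  obtain hM | hM : Nat.card M = 1 ∨ 2 ≤ Nat.card M := by
    have := Nat.card_pos (α := M); omega
  · simp only [hM] at total ⊢
    omega
  · obtain ⟨k, hk⟩ := Nat.exists_eq_add_of_le' hM
    rw [hk] at total ⊢
    simp only [Nat.add_sub_cancel, show k + 2 - 1 = k + 1 from rfl] at total
    zify at total
    push_cast
    linarith

end PairCount

lemma not_linearIndependent_pair_of_mul_eq_mul {R ι : Type*} [CommRing R] [Nontrivial R]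
    {p q : ι → R} (h : ∀ i j, p i * q j = p j * q i) : ¬LinearIndependent R ![p, q] := by
  intro hind
  rw [LinearIndependent.pair_iff] at hind
  have hp : p = 0 := by
    ext i
    have relation : q i • p + (-p i) • q = 0 := by
      ext j
      simp only [Pi.add_apply, Pi.smul_apply, smul_eq_mul, Pi.zero_apply]
      linear_combination -h i j
    exact neg_eq_zero.mp (hind _ _ relation).2
  exact one_ne_zero (hind 1 0 (by simp [hp])).1

end LinearAlgebra

section Quadratic

variable {V : Type*} [AddCommGroup V] [Module (ZMod 2) V]

variable (V) in
/-- The functions `V → ZMod 2` of degree at most one. -/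
def affineFunctions : Submodule (ZMod 2) (V → ZMod 2) where
  carrier := {f | ∃ (φ : Dual (ZMod 2) V) (a : ZMod 2), ∀ x, f x = φ x + a}
  zero_mem' := ⟨0, 0, by simp⟩
  add_mem' := by
    rintro f g ⟨φ, a, hf⟩ ⟨ψ, b, hg⟩
    exact ⟨φ + ψ, a + b, fun x => by
      simp only [Pi.add_apply, hf, hg, LinearMap.add_apply]
      ring⟩
  smul_mem' := by
    rintro r f ⟨φ, a, hf⟩
    exact ⟨r • φ, r * a, fun x => by
      simp only [Pi.smul_apply, hf, LinearMap.smul_apply, smul_eq_mul]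
      ring⟩

variable (V) in
/-- The functions `V → ZMod 2` of degree at most two, encoded by the condition that every
directional derivative `x ↦ f (x + y) + f x` is affine. -/
def quadraticFunctions : Submodule (ZMod 2) (V → ZMod 2) where
  carrier := {f | ∀ y, (fun x => f (x + y) + f x) ∈ affineFunctions V}
  zero_mem' y := by
    simp only [Pi.zero_apply, add_zero]
    exact zero_mem _
  add_mem' {f g} hf hg y := by
    convert (affineFunctions V).add_mem (hf y) (hg y) using 1
    ext x
    simp only [Pi.add_apply]
    ring
  smul_mem' r f hf y := by
    convert (affineFunctions V).smul_mem r (hf y) using 1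
    ext x
    simp only [Pi.smul_apply, smul_eq_mul]
    ring

lemma mul_mem_quadraticFunctions {f g : V → ZMod 2} (hf : f ∈ affineFunctions V)
    (hg : g ∈ affineFunctions V) : f * g ∈ quadraticFunctions V := by
  obtain ⟨φ, a, hφ⟩ := hf
  obtain ⟨ψ, b, hψ⟩ := hg
  intro y
  refine ⟨ψ y • φ + φ y • ψ, φ y * ψ y + φ y * b + a * ψ y, fun x => ?_⟩
  simp only [Pi.mul_apply, hφ, hψ, map_add, LinearMap.add_apply, LinearMap.smul_apply, smul_eq_mul]
  linear_combination CharTwo.add_self_eq_zero ((φ x + a) * (ψ x + b))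

/-- The group of periods of `f`, i.e. the translations leaving `f` invariant. -/
def periods (f : V → ZMod 2) : Submodule (ZMod 2) V :=
  AddSubgroup.toZModSubmodule 2
    { carrier := {y | Function.Periodic f y}
      zero_mem' := fun x => by rw [add_zero]
      add_mem' := Function.Periodic.add_period
      neg_mem' := Function.Periodic.neg }

/-- The product of the affine functions `φ + a` and `ψ + b`. For independent `φ` and `ψ` it is the
indicator of the flat `φ = a + 1, ψ = b + 1` of codimension two. -/
def affineMul (φ ψ : Dual (ZMod 2) V) (a b : ZMod 2) : V → ZMod 2 :=
  fun x => (φ x + a) * (ψ x + b)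

lemma affineMul_eq_one_iff {φ ψ : Dual (ZMod 2) V} {a b : ZMod 2} {x : V} :
    affineMul φ ψ a b x = 1 ↔ φ x = a + 1 ∧ ψ x = b + 1 := by
  have mul_eq_one_iff : ∀ p q a b : ZMod 2, (p + a) * (q + b) = 1 ↔ p = a + 1 ∧ q = b + 1 := by
    decide
  exact mul_eq_one_iff _ _ _ _

lemma affineMul_injective {φ ψ : Dual (ZMod 2) V} (h : LinearIndependent (ZMod 2) ![φ, ψ]) :
    Function.Injective fun q : ZMod 2 × ZMod 2 => affineMul φ ψ q.1 q.2 := by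
  rintro ⟨a, b⟩ ⟨a', b'⟩ heq
  have eval (x : V) : (φ x + a) * (ψ x + b) = (φ x + a') * (ψ x + b') := congrFun heq x
  have constant_terms : a * b = a' * b' := by simpa only [map_zero, zero_add] using eval 0
  have linear_terms : (b - b') • φ + (a - a') • ψ = 0 := by
    ext x
    simp only [LinearMap.add_apply, LinearMap.smul_apply, smul_eq_mul, LinearMap.zero_apply]
    linear_combination eval x - constant_terms
  obtain ⟨hb, ha⟩ := LinearIndependent.pair_iff.mp h _ _ linear_terms
  rw [sub_eq_zero.mp ha, sub_eq_zero.mp hb]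

lemma affineMul_mem_iff {C : Submodule (ZMod 2) (V → ZMod 2)} (hC : affineFunctions V ≤ C)
    {φ ψ : Dual (ZMod 2) V} {a b : ZMod 2} :
    affineMul φ ψ a b ∈ C ↔ ⇑φ * ⇑ψ ∈ C := by
  have affine_mem : (fun x => (b • φ + a • ψ) x + a * b) ∈ C := hC ⟨_, _, fun _ => rfl⟩
  have expand : affineMul φ ψ a b = ⇑φ * ⇑ψ + fun x => (b • φ + a • ψ) x + a * b := by
    ext x
    simp only [affineMul, Pi.add_apply, Pi.mul_apply, LinearMap.add_apply, LinearMap.smul_apply,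
      smul_eq_mul]
    ring
  rw [expand, Submodule.add_mem_iff_left C affine_mem]

/-- `f` is the indicator of one of the flats on which both linear forms of the pair `p` are
constant. -/
def IsCutOutBy (f : V → ZMod 2) (p : Dual (ZMod 2) V × Dual (ZMod 2) V) : Prop :=
  ∃ q : ZMod 2 × ZMod 2, affineMul p.1 p.2 q.1 q.2 = f

variable [Fintype V]

lemma two_mul_hammingNorm_affine {φ : Dual (ZMod 2) V} (hφ : φ ≠ 0) (a : ZMod 2) :
    2 * hammingNorm (fun x => φ x + a) = Fintype.card V := by
  obtain ⟨u, hu⟩ := DFunLike.ne_iff.mp hφ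
  have hu_one : φ u = 1 := zmod_two_eq_one_of_ne_zero hu
  set g : V → ZMod 2 := fun x => φ x + a
  have translate_eq : (fun x => g (x + u)) = g + 1 := by
    ext x
    simp only [g, map_add, hu_one, Pi.add_apply, Pi.one_apply]
    ring
  have complement := hammingNorm_add_hammingNorm g 1
  rw [← translate_eq, hammingNorm_comp_add_right, hammingNorm_one, mul_one] at complement
  omega

lemma card_le_two_mul_hammingNorm {f : V → ZMod 2} (hf : f ∈ affineFunctions V) (hf₀ : f ≠ 0) :
    Fintype.card V ≤ 2 * hammingNorm f := by
  obtain ⟨φ, a, hφ⟩ := hf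
  obtain rfl : f = fun x => φ x + a := funext hφ
  by_cases hφ₀ : φ = 0
  · have ha : a ≠ 0 := fun ha => hf₀ (by ext x; simp [hφ₀, ha])
    simp only [hammingNorm, hφ₀, LinearMap.zero_apply, zero_add, ne_eq, ha, not_false_eq_true,
      filter_true, card_univ]
    omega
  · exact (two_mul_hammingNorm_affine hφ₀ a).ge

lemma four_mul_hammingNorm_affineMul {φ ψ : Dual (ZMod 2) V}
    (h : LinearIndependent (ZMod 2) ![φ, ψ]) (a b : ZMod 2) :
    4 * hammingNorm (affineMul φ ψ a b) = Fintype.card V := by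
  obtain ⟨hφ, hψ, hne⟩ := linearIndependent_pair_zmod_two_iff.mp h
  have hsum : φ + ψ ≠ 0 := fun h0 => hne (by
    rwa [← ZModModule.sub_eq_add, sub_eq_zero] at h0)
  have hadd : (fun x => φ x + a) + (fun x => ψ x + b) = fun x => (φ + ψ) x + (a + b) := by
    ext x
    simp only [Pi.add_apply, LinearMap.add_apply]
    ring
  have hmul : (fun x => φ x + a) * (fun x => ψ x + b) = affineMul φ ψ a b := rfl
  have incl_excl := hammingNorm_add_hammingNorm (fun x => φ x + a) (fun x => ψ x + b)
  rw [hadd, hmul] at incl_excl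
  have := two_mul_hammingNorm_affine hφ a
  have := two_mul_hammingNorm_affine hψ b
  have := two_mul_hammingNorm_affine hsum (a + b)
  omega

section LowWeight

variable {f : V → ZMod 2}

-- Otherwise the derivative along `y` is a nonzero affine function, whose support has at least
-- `|V| / 2` points; but it is the symmetric difference of two overlapping sets of size `|V| / 4`.
lemma mem_periods_of_eq_one (hf : f ∈ quadraticFunctions V)
    (hw : 4 * hammingNorm f ≤ Fintype.card V) {x y : V} (hx : f x = 1) (hxy : f (x + y) = 1) :
    y ∈ periods f := by
  set translate : V → ZMod 2 := fun x => f (x + y)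
  by_contra hy
  have derivative_ne_zero : translate + f ≠ 0 := fun h => hy fun x => by
    have : translate x + f x = 0 := congrFun h x
    rwa [← ZModModule.sub_eq_add, sub_eq_zero] at this
  have overlap_pos : 0 < hammingNorm (translate * f) :=
    hammingNorm_pos_iff.mpr (Function.ne_iff.mpr ⟨x, by simp [translate, hx, hxy]⟩)
  have half_le := card_le_two_mul_hammingNorm (hf y) derivative_ne_zero
  have symmDiff_card := hammingNorm_add_hammingNorm translate f
  rw [hammingNorm_comp_add_right f y] at symmDiff_card
  change Fintype.card V ≤ 2 * hammingNorm (translate + f) at half_le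
  omega

lemma eq_one_iff_sub_mem_periods (hf : f ∈ quadraticFunctions V)
    (hw : 4 * hammingNorm f ≤ Fintype.card V) {x₀ : V} (hx₀ : f x₀ = 1) (x : V) :
    f x = 1 ↔ x - x₀ ∈ periods f := by
  refine ⟨fun hx => mem_periods_of_eq_one hf hw hx₀ (by rwa [add_sub_cancel]), fun hx => ?_⟩
  rw [← hx₀, ← hx x₀, add_sub_cancel]

lemma natCard_periods (hf : f ∈ quadraticFunctions V) (hw : 4 * hammingNorm f ≤ Fintype.card V)
    {x₀ : V} (hx₀ : f x₀ = 1) : Nat.card (periods f) = hammingNorm f := by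
  classical
  have mem_support_iff (x : V) : f x ≠ 0 ↔ x - x₀ ∈ periods f := by
    rw [← eq_one_iff_sub_mem_periods hf hw hx₀]
    exact ⟨zmod_two_eq_one_of_ne_zero, fun h => h ▸ one_ne_zero⟩
  rw [hammingNorm, ← Fintype.card_subtype, ← Nat.card_eq_fintype_card]
  exact (Nat.card_congr ((Equiv.subRight x₀).subtypeEquiv mem_support_iff)).symm

lemma natCard_dualAnnihilator_periods (hf : f ∈ quadraticFunctions V)
    (hw : 4 * hammingNorm f = Fintype.card V) :
    Nat.card (periods f).dualAnnihilator = 4 := by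
  obtain ⟨x₀, hx₀⟩ := exists_eq_one_of_four_mul_hammingNorm hw
  have card_mul := natCard_mul_natCard_dualAnnihilator (periods f)
  rw [Nat.card_eq_fintype_card (α := V), ← hw, ← natCard_periods hf hw.le hx₀, mul_comm 4]
    at card_mul
  exact Nat.eq_of_mul_eq_mul_left Nat.card_pos card_mul

end LowWeight

lemma isCutOutBy_iff_mem_dualAnnihilator {f : V → ZMod 2} (hf : f ∈ quadraticFunctions V)
    (hw : 4 * hammingNorm f = Fintype.card V) {φ ψ : Dual (ZMod 2) V}
    (h : LinearIndependent (ZMod 2) ![φ, ψ]) :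
    IsCutOutBy f (φ, ψ) ↔
      φ ∈ (periods f).dualAnnihilator ∧ ψ ∈ (periods f).dualAnnihilator := by
  obtain ⟨x₀, hx₀⟩ := exists_eq_one_of_four_mul_hammingNorm hw
  simp only [Submodule.mem_dualAnnihilator]
  constructor
  · rintro ⟨⟨a, b⟩, rfl⟩
    rw [← forall₂_and]
    intro y hy
    obtain ⟨hφ₀, hψ₀⟩ := affineMul_eq_one_iff.mp hx₀
    obtain ⟨hφy, hψy⟩ := affineMul_eq_one_iff.mp ((hy x₀).trans hx₀)
    rw [map_add, hφ₀, add_eq_left] at hφy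
    rw [map_add, hψ₀, add_eq_left] at hψy
    exact ⟨hφy, hψy⟩
  · rintro ⟨hφ, hψ⟩
    refine ⟨(φ x₀ + 1, ψ x₀ + 1), (eq_of_hammingNorm_le (fun x hx => ?_) ?_).symm⟩
    · have hmem := (eq_one_iff_sub_mem_periods hf hw.le hx₀ x).mp hx
      have hφx := sub_eq_zero.mp ((map_sub φ x x₀).symm.trans (hφ _ hmem))
      have hψx := sub_eq_zero.mp ((map_sub ψ x x₀).symm.trans (hψ _ hmem))
      rw [affineMul_eq_one_iff, hφx, hψx]
      simp only [add_assoc, CharTwo.add_self_eq_zero, add_zero, and_self]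
    · refine Nat.le_of_mul_le_mul_left ?_ four_pos
      rw [four_mul_hammingNorm_affineMul h, hw]

section Count

variable {C : Submodule (ZMod 2) (V → ZMod 2)}

lemma natCard_pairs_cutting_out (hAffine : affineFunctions V ≤ C) {f : V → ZMod 2} (hfC : f ∈ C)
    (hf : f ∈ quadraticFunctions V) (hw : 4 * hammingNorm f = Fintype.card V) :
    Nat.card {p : Dual (ZMod 2) V × Dual (ZMod 2) V //
      (LinearIndependent (ZMod 2) ![p.1, p.2] ∧ ⇑p.1 * ⇑p.2 ∈ C) ∧ IsCutOutBy f p} = 6 := by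
  have : Finite (Dual (ZMod 2) V) := DFunLike.finite _
  have count := natCard_linearIndependent_pair_mem (periods f).dualAnnihilator
  rw [natCard_dualAnnihilator_periods hf hw] at count
  refine Eq.trans ?_ count
  refine Nat.card_congr (Equiv.subtypeEquivRight fun ⟨φ, ψ⟩ => ?_)
  rw [and_assoc]
  refine and_congr_right fun hind => ?_
  rw [← isCutOutBy_iff_mem_dualAnnihilator hf hw hind, and_iff_right_iff_imp]
  rintro ⟨q, rfl⟩
  exact (affineMul_mem_iff hAffine).mp hfC

lemma natCard_codewords_cut_out_by (hAffine : affineFunctions V ≤ C)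
    {p : Dual (ZMod 2) V × Dual (ZMod 2) V} (hind : LinearIndependent (ZMod 2) ![p.1, p.2])
    (hp : ⇑p.1 * ⇑p.2 ∈ C) :
    Nat.card {f // (f ∈ C ∧ 4 * hammingNorm f = Fintype.card V) ∧ IsCutOutBy f p} = 4 := by
  have isCutOutBy_iff_mem_range (f : V → ZMod 2) :
      (f ∈ C ∧ 4 * hammingNorm f = Fintype.card V) ∧ IsCutOutBy f p ↔
        f ∈ Set.range fun q : ZMod 2 × ZMod 2 => affineMul p.1 p.2 q.1 q.2 := by
    refine and_iff_right_of_imp ?_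
    rintro ⟨q, rfl⟩
    exact ⟨(affineMul_mem_iff hAffine).mpr hp, four_mul_hammingNorm_affineMul hind _ _⟩
  rw [Nat.card_congr (Equiv.subtypeEquivRight isCutOutBy_iff_mem_range)]
  rw [Nat.card_congr (Equiv.ofInjective _ (affineMul_injective hind)).symm]
  simp

theorem three_mul_natCard_quarter_weight (hAffine : affineFunctions V ≤ C)
    (hQuadratic : C ≤ quadraticFunctions V) :
    3 * Nat.card {f // f ∈ C ∧ 4 * hammingNorm f = Fintype.card V} =
      2 * Nat.card {p : Dual (ZMod 2) V × Dual (ZMod 2) V //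
        LinearIndependent (ZMod 2) ![p.1, p.2] ∧ ⇑p.1 * ⇑p.2 ∈ C} := by
  classical
  have : Finite (Dual (ZMod 2) V) := DFunLike.finite _
  have := Fintype.ofFinite (Dual (ZMod 2) V)
  simp only [Nat.card_eq_fintype_card, Fintype.card_subtype]
  have double_count := card_mul_eq_card_mul IsCutOutBy
    (s := ({f | f ∈ C ∧ 4 * hammingNorm f = Fintype.card V} : Finset (V → ZMod 2)))
    (t := {p | LinearIndependent (ZMod 2) ![p.1, p.2] ∧ ⇑p.1 * ⇑p.2 ∈ C}) (m := 6) (n := 4)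
    (fun f hf => by
      obtain ⟨hfC, hw⟩ := (mem_filter_univ f).mp hf
      have six := natCard_pairs_cutting_out hAffine hfC (hQuadratic hfC) hw
      rwa [Nat.card_eq_fintype_card, Fintype.card_subtype, ← filter_filter] at six)
    (fun p hp => by
      obtain ⟨hind, hpC⟩ := (mem_filter_univ p).mp hp
      have four := natCard_codewords_cut_out_by hAffine hind hpC
      rwa [Nat.card_eq_fintype_card, Fintype.card_subtype, ← filter_filter] at four)
  omega

end Count

end Quadratic

section BlockCode

variable {ι κ : Type*}

/-- The second-order subproduct code for the partition of the variables into the fibres of `blk`: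
the span of the monomials of degree at most two whose variables lie in distinct blocks. -/
def blockCode (blk : ι → κ) : Submodule (ZMod 2) ((ι → ZMod 2) → ZMod 2) :=
  Submodule.span (ZMod 2)
    {c | ∃ S : Finset ι, #S ≤ 2 ∧ Set.InjOn blk S ∧ c = fun x => ∏ i ∈ S, x i}

/-- The restrictions of the vectors `p` and `q` to each block are linearly dependent. -/
def IsBlockwiseDependent (blk : ι → κ) (p q : ι → ZMod 2) : Prop :=
  ∀ b, ¬LinearIndependent (ZMod 2) ![fun i : {i // blk i = b} => p i, fun i => q i]

variable {blk : ι → κ}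

lemma one_mem_blockCode : 1 ∈ blockCode blk :=
  Submodule.subset_span ⟨∅, by simp, by simp, by ext; simp⟩

lemma coordinate_mem_blockCode (i : ι) : (fun x => x i) ∈ blockCode blk :=
  Submodule.subset_span ⟨{i}, by simp, by simp, by simp⟩

lemma coordinate_mul_mem_blockCode {i j : ι} (hij : blk i ≠ blk j) :
    (fun x => x i * x j) ∈ blockCode blk := by
  classical
  refine Submodule.subset_span ⟨{i, j}, card_le_two, ?_, ?_⟩
  · simp only [coe_pair, Set.injOn_pair]
    exact fun h => absurd h hij
  · simp only [prod_pair (ne_of_apply_ne blk hij)]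

lemma sum_mul_mem_blockCode {α : Type*} (s : Finset α) (a : α → ZMod 2) (v : α → ι) :
    (fun x => ∑ k ∈ s, a k * x (v k)) ∈ blockCode blk := by
  convert (blockCode blk).sum_mem fun k (_ : k ∈ s) =>
    (blockCode blk).smul_mem (a k) (coordinate_mem_blockCode (v k)) using 1
  ext x
  simp

lemma affineFunctions_le_blockCode [Finite ι] : affineFunctions (ι → ZMod 2) ≤ blockCode blk := by
  classical
  have := Fintype.ofFinite ι
  rintro f ⟨φ, a, hf⟩
  obtain ⟨p, rfl⟩ := (dotProductEquiv (ZMod 2) ι).surjective φ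
  obtain rfl : f = (fun x => ∑ i, p i * x i) + a • 1 := by
    ext x
    simp only [hf, dotProductEquiv_apply_apply, dotProduct, Pi.add_apply, Pi.smul_apply,
      Pi.one_apply, smul_eq_mul, mul_one]
  exact add_mem (sum_mul_mem_blockCode _ _ _) (Submodule.smul_mem _ _ one_mem_blockCode)

lemma blockCode_le_quadraticFunctions : blockCode blk ≤ quadraticFunctions (ι → ZMod 2) := by
  classical
  have coordinate_mem (i : ι) : (fun x => x i) ∈ affineFunctions (ι → ZMod 2) :=
    ⟨LinearMap.proj i, 0, fun x => by simp⟩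
  have one_mem : 1 ∈ affineFunctions (ι → ZMod 2) := ⟨0, 1, fun x => by simp⟩
  refine Submodule.span_le.mpr ?_
  rintro _ ⟨S, hcard, -, rfl⟩
  obtain hS | hS | hS : #S = 0 ∨ #S = 1 ∨ #S = 2 := by omega
  · obtain rfl := card_eq_zero.mp hS
    have := mul_mem_quadraticFunctions one_mem one_mem
    rwa [mul_one] at this
  · obtain ⟨i, rfl⟩ := card_eq_one.mp hS
    simpa using mul_mem_quadraticFunctions (coordinate_mem i) one_mem
  · obtain ⟨i, j, hij, rfl⟩ := card_eq_two.mp hS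
    simp only [prod_pair hij]
    exact mul_mem_quadraticFunctions (coordinate_mem i) (coordinate_mem j)

-- The left-hand side is the coefficient of `x i * x j` in the polynomial representing `f`.
lemma second_difference_eq_zero [DecidableEq ι] {f : (ι → ZMod 2) → ZMod 2}
    (hf : f ∈ blockCode blk) {i j : ι} (hij : i ≠ j) (hblk : blk i = blk j) :
    f (Pi.single i 1 + Pi.single j 1) + f (Pi.single i 1) + f (Pi.single j 1) + f 0 = 0 := by
  induction hf using Submodule.span_induction with
  | zero => simp
  | add f g _ _ hf hg =>
    simp only [Pi.add_apply]
    linear_combination hf + hg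
  | smul a f _ hf =>
    simp only [Pi.smul_apply, smul_eq_mul]
    linear_combination a * hf
  | mem f hf =>
    obtain ⟨S, -, hinj, rfl⟩ := hf
    have prod_add_single {k : ι} (hk : k ∉ S) (x : ι → ZMod 2) :
        ∏ l ∈ S, (x + Pi.single k 1 : ι → ZMod 2) l = ∏ l ∈ S, x l :=
      prod_congr rfl fun l hl => by simp [ne_of_mem_of_not_mem hl hk]
    have hS : i ∉ S ∨ j ∉ S := by
      by_contra! h
      exact hij (hinj h.1 h.2 hblk)
    beta_reduce
    obtain hi | hj := hS
    · have := prod_add_single hi 0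
      rw [zero_add] at this
      rw [add_comm (Pi.single i 1), prod_add_single hi, this]
      linear_combination CharTwo.add_self_eq_zero
        (∏ l ∈ S, (Pi.single j 1 : ι → ZMod 2) l + ∏ l ∈ S, (0 : ι → ZMod 2) l)
    · have := prod_add_single hj 0
      rw [zero_add] at this
      rw [prod_add_single hj, this]
      linear_combination CharTwo.add_self_eq_zero
        (∏ l ∈ S, (Pi.single i 1 : ι → ZMod 2) l + ∏ l ∈ S, (0 : ι → ZMod 2) l)

section Product

variable [Fintype ι] {p q : ι → ZMod 2}

lemma isBlockwiseDependent_of_mul_mem (h : (fun x => (p ⬝ᵥ x) * (q ⬝ᵥ x)) ∈ blockCode blk) :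
    IsBlockwiseDependent blk p q := by
  classical
  refine fun b => not_linearIndependent_pair_of_mul_eq_mul fun i j => ?_
  obtain hij | hij := eq_or_ne i.1 j.1
  · simp only [hij]
  have minor := second_difference_eq_zero h hij (i.2.trans j.2.symm)
  simp only [dotProduct_add, dotProduct_single_one, dotProduct_zero, mul_zero, add_zero] at minor
  rw [← sub_eq_zero, ZModModule.sub_eq_add]
  linear_combination minor - CharTwo.add_self_eq_zero (p i * q i + p j * q j)

end Product

section BlockForms

variable [Fintype ι] [DecidableEq κ] {b c : κ}

lemma blockForm_mul_mem_of_ne (hbc : b ≠ c) (u : {i // blk i = b} → ZMod 2)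
    (v : {j // blk j = c} → ZMod 2) :
    (fun x => (∑ i, u i * x i) * ∑ j, v j * x j) ∈ blockCode blk := by
  have expand : (fun x : ι → ZMod 2 => (∑ i, u i * x i) * ∑ j, v j * x j) =
      ∑ i, ∑ j, (u i * v j) • fun x => x i * x j := by
    ext x
    simp only [sum_mul_sum, Finset.sum_apply, Pi.smul_apply, smul_eq_mul, mul_mul_mul_comm]
  rw [expand]
  refine sum_mem fun i _ => sum_mem fun j _ => Submodule.smul_mem _ _ ?_
  exact coordinate_mul_mem_blockCode (by rwa [i.2, j.2])

lemma blockForm_mul_mem_of_not_linearIndependent {u v : {i // blk i = b} → ZMod 2}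
    (h : ¬LinearIndependent (ZMod 2) ![u, v]) :
    (fun x => (∑ i, u i * x i) * ∑ i, v i * x i) ∈ blockCode blk := by
  have mul_self_eq : ∀ a : ZMod 2, a * a = a := by decide
  obtain rfl | rfl | rfl : u = 0 ∨ v = 0 ∨ u = v := by
    simpa only [linearIndependent_pair_zmod_two_iff, ne_eq, not_and_or, not_not] using h
  · simp only [Pi.zero_apply, zero_mul, sum_const_zero]
    exact zero_mem _
  · simp only [Pi.zero_apply, zero_mul, sum_const_zero, mul_zero]
    exact zero_mem _
  · simp only [mul_self_eq]
    exact sum_mul_mem_blockCode _ _ _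

end BlockForms

lemma mul_mem_blockCode_iff [Fintype ι] [Finite κ] {p q : ι → ZMod 2} :
    (fun x => (p ⬝ᵥ x) * (q ⬝ᵥ x)) ∈ blockCode blk ↔ IsBlockwiseDependent blk p q := by
  classical
  have := Fintype.ofFinite κ
  refine ⟨isBlockwiseDependent_of_mul_mem, fun h => ?_⟩
  have expand : (fun x => (p ⬝ᵥ x) * (q ⬝ᵥ x)) = ∑ b, ∑ c, fun x =>
      (∑ i : {i // blk i = b}, p i * x i) * ∑ j : {j // blk j = c}, q j * x j := by
    ext x
    simp only [dotProduct, Finset.sum_apply]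
    rw [← Fintype.sum_fiberwise blk, ← Fintype.sum_fiberwise blk, sum_mul_sum]
  rw [expand]
  refine sum_mem fun b _ => sum_mem fun c _ => ?_
  obtain rfl | hbc := eq_or_ne b c
  · exact blockForm_mul_mem_of_not_linearIndependent (h b)
  · exact blockForm_mul_mem_of_ne hbc _ _

section Count

lemma natCard_forall_fiber [Fintype κ] {A : Type*} (blk : ι → κ)
    (P : ∀ b, ({i // blk i = b} → A) → Prop) :
    Nat.card {f : ι → A // ∀ b, P b fun i => f i} = ∏ b, Nat.card {u // P b u} := by
  rw [← Nat.card_pi]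
  let splitFibers : (ι → A) ≃ ∀ b, {i // blk i = b} → A :=
    (Equiv.arrowCongr (Equiv.sigmaFiberEquiv blk).symm (Equiv.refl A)).trans
      (Equiv.piCurry fun _ _ => A)
  exact Nat.card_congr ((splitFibers.subtypeEquiv fun f => Iff.rfl).trans Equiv.subtypePiEquivPi)

lemma IsBlockwiseDependent.of_not_linearIndependent {p q : ι → ZMod 2}
    (h : ¬LinearIndependent (ZMod 2) ![p, q]) : IsBlockwiseDependent blk p q := by
  intro b hb
  refine h (LinearIndependent.of_comp
    (LinearMap.funLeft (ZMod 2) (ZMod 2) (Subtype.val : {i // blk i = b} → ι)) ?_)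
  rwa [← FinVec.map_eq]

variable [Finite ι]

lemma natCard_dual_pair_mul_mem_blockCode [Finite κ] :
    Nat.card {p : Dual (ZMod 2) (ι → ZMod 2) × Dual (ZMod 2) (ι → ZMod 2) //
      LinearIndependent (ZMod 2) ![p.1, p.2] ∧ ⇑p.1 * ⇑p.2 ∈ blockCode blk} =
    Nat.card {p : (ι → ZMod 2) × (ι → ZMod 2) //
      LinearIndependent (ZMod 2) ![p.1, p.2] ∧ IsBlockwiseDependent blk p.1 p.2} := by
  classical
  have := Fintype.ofFinite ι
  let toDual := dotProductEquiv (ZMod 2) ι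
  refine (Nat.card_congr ((toDual.toEquiv.prodCongr toDual.toEquiv).subtypeEquiv
    fun ⟨p, q⟩ => and_congr ?_ mul_mem_blockCode_iff.symm)).symm
  simp only [linearIndependent_pair_zmod_two_iff, Equiv.prodCongr_apply, Prod.map_apply,
    LinearEquiv.coe_toEquiv, ne_eq, EmbeddingLike.map_eq_zero_iff, EmbeddingLike.apply_eq_iff_eq]

variable (ι) in
lemma natCard_not_linearIndependent_pair_pi :
    (Nat.card {p : (ι → ZMod 2) × (ι → ZMod 2) // ¬LinearIndependent (ZMod 2) ![p.1, p.2]} : ℤ) =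
      3 * 2 ^ Nat.card ι - 2 := by
  rw [natCard_not_linearIndependent_pair, Nat.card_fun, Nat.card_zmod]
  norm_cast

variable [Fintype κ] (blk)

lemma natCard_isBlockwiseDependent :
    (Nat.card {p : (ι → ZMod 2) × (ι → ZMod 2) // IsBlockwiseDependent blk p.1 p.2} : ℤ) =
      ∏ b, (3 * 2 ^ Nat.card {i // blk i = b} - 2) := by
  have split := natCard_forall_fiber blk fun b (u : {i // blk i = b} → ZMod 2 × ZMod 2) =>
    ¬LinearIndependent (ZMod 2) ![fun i => (u i).1, fun i => (u i).2]
  have pairs : Nat.card {p : (ι → ZMod 2) × (ι → ZMod 2) // IsBlockwiseDependent blk p.1 p.2} =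
      ∏ b, Nat.card {p : ({i // blk i = b} → ZMod 2) × ({i // blk i = b} → ZMod 2) //
        ¬LinearIndependent (ZMod 2) ![p.1, p.2]} := by
    convert split using 1
    · exact (Nat.card_congr ((Equiv.arrowProdEquivProdArrow ι _ _).subtypeEquiv
        fun _ => Iff.rfl)).symm
    · exact prod_congr rfl fun b _ => (Nat.card_congr
        ((Equiv.arrowProdEquivProdArrow _ _ _).subtypeEquiv fun _ => Iff.rfl)).symm
  rw [pairs]
  push_cast
  simp only [natCard_not_linearIndependent_pair_pi]

lemma natCard_linearIndependent_isBlockwiseDependent :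
    (Nat.card {p : (ι → ZMod 2) × (ι → ZMod 2) //
      LinearIndependent (ZMod 2) ![p.1, p.2] ∧ IsBlockwiseDependent blk p.1 p.2} : ℤ) =
      ∏ b, (3 * 2 ^ Nat.card {i // blk i = b} - 2) - 3 * 2 ^ Nat.card ι + 2 := by
  classical
  have := Fintype.ofFinite ι
  have split := card_filter_add_card_filter_not
    (s := {p : (ι → ZMod 2) × (ι → ZMod 2) | IsBlockwiseDependent blk p.1 p.2})
    (fun p => LinearIndependent (ZMod 2) ![p.1, p.2])
  simp only [filter_filter, and_iff_right_of_imp IsBlockwiseDependent.of_not_linearIndependent,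
    and_comm (a := IsBlockwiseDependent _ _ _), ← Fintype.card_subtype, ← Nat.card_eq_fintype_card]
    at split
  rw [← natCard_isBlockwiseDependent blk, ← split]
  push_cast
  rw [natCard_not_linearIndependent_pair_pi]
  ring

end Count

theorem stmt_10_general [Fintype ι] [DecidableEq ι] [Fintype κ] (blk : ι → κ) :
    3 * (Nat.card {c // c ∈ blockCode blk ∧ 4 * hammingNorm c = 2 ^ Nat.card ι} : ℤ) =
      2 * (∏ b, (3 * 2 ^ Nat.card {i // blk i = b} - 2) - 3 * 2 ^ Nat.card ι + 2) := by
  have double_count := three_mul_natCard_quarter_weight (C := blockCode blk)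
    affineFunctions_le_blockCode blockCode_le_quadraticFunctions
  rw [natCard_dual_pair_mul_mem_blockCode, Fintype.card_fun, ZMod.card, Fintype.card_eq_nat_card]
    at double_count
  rw [← natCard_linearIndependent_isBlockwiseDependent]
  exact_mod_cast double_count

end BlockCode

section ConsecutiveBlocks

lemma Ccode_eq_blockCode (m m' : ℕ) :
    Ccode m m' = blockCode (Fin.divNat : Fin (m * m') → Fin m) := by
  have injOn_divNat_iff (S : Finset (Fin (m * m'))) :
      (∀ b : ℕ, #({i ∈ S | i.val / m' = b} : Finset (Fin (m * m'))) ≤ 1) ↔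
        Set.InjOn Fin.divNat (S : Set (Fin (m * m'))) := by
    simp only [card_le_one, mem_filter, Set.InjOn, mem_coe]
    exact ⟨fun h i hi j hj hij => h _ i ⟨hi, congrArg Fin.val hij⟩ j ⟨hj, rfl⟩,
      fun h b i hi j hj => h hi.1 hj.1 (Fin.ext (hi.2.trans hj.2.symm))⟩
  simp only [Ccode, blockCode, injOn_divNat_iff]
  rfl

lemma wt_eq_hammingNorm {n : ℕ} (c : (Fin n → ZMod 2) → ZMod 2) : wt c = hammingNorm c := by
  have eq_one_iff : ∀ a : ZMod 2, a = 1 ↔ a ≠ 0 := by decide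
  simp only [wt, hammingNorm, eq_one_iff]

lemma wt_eq_two_pow_sub_two_iff {n : ℕ} (hn : 2 ≤ n) (c : (Fin n → ZMod 2) → ZMod 2) :
    wt c = 2 ^ (n - 2) ↔ 4 * hammingNorm c = 2 ^ n := by
  obtain ⟨k, rfl⟩ := Nat.exists_eq_add_of_le' hn
  rw [wt_eq_hammingNorm, Nat.add_sub_cancel, pow_add]
  omega

lemma natCard_divNat_fiber {m m' : ℕ} (b : Fin m) :
    Nat.card {i : Fin (m * m') // i.divNat = b} = m' := by
  have fiber_equiv : {i : Fin (m * m') // i.divNat = b} ≃ {a : Fin m // a = b} × Fin m' :=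
    (finProdFinEquiv.symm.subtypeEquiv fun _ => Iff.rfl).trans
      (Equiv.prodSubtypeFstEquivSubtypeProd (p := (· = b)))
  rw [Nat.card_congr fiber_equiv, Nat.card_prod, Nat.card_unique, Nat.card_fin, one_mul]

end ConsecutiveBlocks

/-- the number of minimum weight codewords of `C` is
`(2/3)·((3·2^{m'} − 2)^m − 3·2^{m·m'} + 2)`. -/
theorem stmt_10 (m m' : ℕ) (hm : 2 ≤ m) (hm' : 2 ≤ m') :
    3 * (Nat.card {c : (Fin (m * m') → ZMod 2) → ZMod 2 //
        c ∈ Ccode m m' ∧ wt c = 2 ^ (m * m' - 2)} : ℤ) =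
      2 * ((3 * 2 ^ m' - 2) ^ m - 3 * 2 ^ (m * m') + 2) := by
  have two_le : 2 ≤ m * m' := by nlinarith
  have general := stmt_10_general (Fin.divNat : Fin (m * m') → Fin m)
  simpa only [← Ccode_eq_blockCode, ← wt_eq_two_pow_sub_two_iff two_le, natCard_divNat_fiber,
    Nat.card_fin, prod_const, card_univ, Fintype.card_fin] using general
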